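/- Let λ ∈ ℝ. The function −F_λ(x), where F_λ(x) = ψ'(x) − λ(4 + 8x + 5x²)/(24x(1+x)³(2+x)²) − (24 + 120x + 283x² + 399x³ + 345x⁴ + 181x⁵ + 51x⁶ + 6x⁷)/(6x²(1+x)⁴(2+x)²), is completely monotonic on (0,∞) if and only if λ ≥ 4. -/

import Mathlib

/-- The digamma function `ψ(x) = Γ'(x)/Γ(x)`. -/
noncomputable def digamma (x : ℝ) : ℝ := deriv Real.Gamma x / Real.Gamma x

/-- A function is completely monotonic on a set `s` if it has derivatives of all
orders there and `(-1)^n f^(n)(x) ≥ 0` for all `x ∈ s` and all `n ≥ 0`. -/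
def CompletelyMonotonicOn (f : ℝ → ℝ) (s : Set ℝ) : Prop :=
  ContDiffOn ℝ (⊤ : ℕ∞) f s ∧
    ∀ n : ℕ, ∀ x ∈ s, 0 ≤ (-1 : ℝ) ^ n * iteratedDerivWithin n f s x


open Set Filter Topology

/-- A sequence of functions with each the negative derivative of the previous. -/
def DSeq (F : ℕ → ℝ → ℝ) : Prop :=
  ∀ n : ℕ, ∀ x : ℝ, 0 < x → HasDerivAt (F n) (-(F (n + 1) x)) x

lemma DSeq.iter {F : ℕ → ℝ → ℝ} (h : DSeq F) (n : ℕ) :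
    ∀ x ∈ Ioi (0:ℝ), iteratedDerivWithin n (F 0) (Ioi 0) x = (-1 : ℝ) ^ n * F n x := by
  induction n with
  | zero => intro x hx; simp
  | succ n ih =>
    intro x hx
    rw [iteratedDerivWithin_succ, derivWithin_congr ih (ih x hx),
      derivWithin_of_isOpen isOpen_Ioi hx, ((h n x hx).const_mul _).deriv]
    ring

lemma DSeq.contDiffOn {F : ℕ → ℝ → ℝ} (h : DSeq F) :
    ContDiffOn ℝ (⊤ : ℕ∞) (F 0) (Ioi 0) := by
  apply contDiffOn_of_differentiableOn_deriv
  intro m _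
  have : DifferentiableOn ℝ (fun x => (-1 : ℝ) ^ m * F m x) (Ioi 0) := fun x hx =>
    ((h m x hx).const_mul _).differentiableAt.differentiableWithinAt
  exact this.congr (h.iter m)

lemma neg_one_sq_pow (n : ℕ) (a : ℝ) : (-1 : ℝ) ^ n * ((-1 : ℝ) ^ n * a) = a := by
  rw [← mul_assoc, ← mul_pow]; simp

lemma DSeq.cm {F : ℕ → ℝ → ℝ} (h : DSeq F) (h0 : ∀ n, ∀ x, 0 < x → 0 ≤ F n x) :
    CompletelyMonotonicOn (F 0) (Ioi 0) := by
  refine ⟨h.contDiffOn, fun n x hx => ?_⟩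
  rw [h.iter n x hx, neg_one_sq_pow]
  exact h0 n x hx

lemma cm_congr {f g : ℝ → ℝ} (hf : CompletelyMonotonicOn f (Ioi 0))
    (h : ∀ x, 0 < x → g x = f x) : CompletelyMonotonicOn g (Ioi 0) := by
  refine ⟨hf.1.congr h, fun n x hx => ?_⟩
  rw [iteratedDerivWithin_congr (s := Ioi (0:ℝ)) (f := g) (g := f) (fun y hy => h y hy) hx]
  exact hf.2 n x hx

lemma DSeq.nonneg {F : ℕ → ℝ → ℝ} (h : DSeq F) (hc : CompletelyMonotonicOn (F 0) (Ioi 0))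
    (n : ℕ) (x : ℝ) (hx : 0 < x) : 0 ≤ F n x := by
  have := hc.2 n x hx
  rwa [h.iter n x hx, neg_one_sq_pow] at this

lemma cm_add {f g : ℝ → ℝ} (hf : CompletelyMonotonicOn f (Ioi 0))
    (hg : CompletelyMonotonicOn g (Ioi 0)) :
    CompletelyMonotonicOn (fun x => f x + g x) (Ioi 0) := by
  refine ⟨hf.1.add hg.1, fun n x hx => ?_⟩
  rw [iteratedDerivWithin_fun_add hx (uniqueDiffOn_Ioi 0)
    ((hf.1 x hx).of_le (by exact_mod_cast le_top)) ((hg.1 x hx).of_le (by exact_mod_cast le_top)),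
    mul_add]
  exact add_nonneg (hf.2 n x hx) (hg.2 n x hx)

lemma cm_cmul {f : ℝ → ℝ} (hf : CompletelyMonotonicOn f (Ioi 0)) {c : ℝ} (hc : 0 ≤ c) :
    CompletelyMonotonicOn (fun x => c * f x) (Ioi 0) := by
  refine ⟨contDiffOn_const.mul hf.1, fun n x hx => ?_⟩
  rw [iteratedDerivWithin_const_mul_field, mul_left_comm]
  exact mul_nonneg hc (hf.2 n x hx)

lemma cm_mul {f g : ℝ → ℝ} (hf : CompletelyMonotonicOn f (Ioi 0))
    (hg : CompletelyMonotonicOn g (Ioi 0)) :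
    CompletelyMonotonicOn (fun x => f x * g x) (Ioi 0) := by
  refine ⟨hf.1.mul hg.1, fun n x hx => ?_⟩
  have := iteratedDerivWithin_mul (n := n) hx (uniqueDiffOn_Ioi 0)
    ((hf.1 x hx).of_le (by exact_mod_cast le_top)) ((hg.1 x hx).of_le (by exact_mod_cast le_top))
  change 0 ≤ (-1 : ℝ) ^ n * iteratedDerivWithin n (f * g) (Ioi 0) x
  rw [this, Finset.mul_sum]
  refine Finset.sum_nonneg fun i hi => ?_
  have hin : i ≤ n := by simpa [Nat.lt_succ_iff] using hi
  have e : (-1 : ℝ) ^ n = (-1) ^ i * (-1) ^ (n - i) := by rw [← pow_add]; congr 1; omega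
  have h1 := hf.2 i x hx
  have h2 := hg.2 (n - i) x hx
  have h3 := mul_nonneg (mul_nonneg (Nat.cast_nonneg (α := ℝ) (n.choose i)) h1) h2
  rw [e]
  refine h3.trans_eq ?_
  ring

lemma cm_pow {f : ℝ → ℝ} (hf : CompletelyMonotonicOn f (Ioi 0)) (m : ℕ) :
    CompletelyMonotonicOn (fun x => f x ^ (m + 1)) (Ioi 0) := by
  induction m with
  | zero => simpa using hf
  | succ m ih => simpa only [pow_succ _ (m + 1)] using cm_mul ih hf

/-- derivative sequence of `1/(x+j)^m` -/
noncomputable def pp (j : ℝ) (m n : ℕ) (x : ℝ) : ℝ :=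
  (m.ascFactorial n : ℝ) * (1 / (x + j) ^ (m + n))

lemma hasDerivAt_invpow (j : ℝ) (hj : 0 ≤ j) (m : ℕ) (x : ℝ) (hx : 0 < x) :
    HasDerivAt (fun x : ℝ => 1 / (x + j) ^ m) (-(m * (1 / (x + j) ^ (m + 1)))) x := by
  have hp : x + j ≠ 0 := by positivity
  have h1 := (((hasDerivAt_id x).add_const j).pow m).inv (pow_ne_zero m hp)
  have h2 : HasDerivAt (fun x : ℝ => 1 / (x + j) ^ m)
      (-(↑m * (x + j) ^ (m - 1) * 1) / ((x + j) ^ m) ^ 2) x := by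
    simpa only [one_div] using! h1
  refine h2.congr_deriv ?_
  rcases m with _ | m
  · simp
  · rw [Nat.add_sub_cancel]
    field_simp
    ring

lemma pp_dseq (j : ℝ) (hj : 0 ≤ j) (m : ℕ) : DSeq (pp j m) := by
  intro n x hx
  have := (hasDerivAt_invpow j hj (m + n) x hx).const_mul (m.ascFactorial n : ℝ)
  refine this.congr_deriv ?_
  simp only [pp, Nat.ascFactorial_succ, add_assoc]
  push_cast
  ring

lemma cm_inv (j : ℝ) (hj : 0 ≤ j) : CompletelyMonotonicOn (fun x : ℝ => 1 / (x + j)) (Ioi 0) := by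
  refine cm_congr ((pp_dseq j hj 1).cm fun n x hx => ?_) fun x hx => ?_
  · unfold pp; positivity
  · simp [pp]

lemma DSeq.add {F G : ℕ → ℝ → ℝ} (h : DSeq F) (hG : DSeq G) :
    DSeq (fun n x => F n x + G n x) := fun n x hx =>
  ((h n x hx).add (hG n x hx)).congr_deriv (by ring)

lemma DSeq.cmul {F : ℕ → ℝ → ℝ} (h : DSeq F) (c : ℝ) :
    DSeq (fun n x => c * F n x) := fun n x hx =>
  ((h n x hx).const_mul c).congr_deriv (by ring)

lemma DSeq.shift {F : ℕ → ℝ → ℝ} (h : DSeq F) :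
    DSeq (fun n x => F n (x + 1)) := fun n x hx =>
  (h n (x + 1) (by linarith)).comp_add_const x 1

lemma summable_invpow (x : ℝ) (hx : 0 < x) (m : ℕ) (hm : 2 ≤ m) :
    Summable (fun k : ℕ => 1 / (x + k) ^ m) := by
  have := (Real.summable_one_div_nat_add_rpow x m).2 (by exact_mod_cast hm)
  refine this.congr fun k => ?_
  rw [Real.rpow_natCast, abs_of_nonneg (by positivity), add_comm]

noncomputable def TT (m : ℕ) (x : ℝ) : ℝ := ∑' k : ℕ, 1 / (x + k) ^ m

lemma TT_deriv (m : ℕ) (hm : 2 ≤ m) (x : ℝ) (hx : 0 < x) :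
    HasDerivAt (TT m) (-(m * TT (m + 1) x)) x := by
  have hu : Summable (fun k : ℕ => (m : ℝ) * (1 / (x / 2 + k) ^ (m + 1))) :=
    (summable_invpow (x / 2) (by positivity) (m + 1) (by omega)).mul_left _
  have := hasDerivAt_tsum_of_isPreconnected (t := Ioi (x / 2)) (y₀ := x) (y := x)
    (g := fun (k : ℕ) (y : ℝ) => 1 / (y + k) ^ m)
    (g' := fun (k : ℕ) (y : ℝ) => -((m : ℝ) * (1 / (y + k) ^ (m + 1)))) hu isOpen_Ioi
    isPreconnected_Ioi
    (fun k y hy => hasDerivAt_invpow k (Nat.cast_nonneg k) m y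
      (lt_trans (by positivity) (mem_Ioi.1 hy)))
    (fun k y hy => by
      have hy' : x / 2 < y := hy
      have : 0 < y := lt_trans (by positivity) hy'
      rw [norm_neg, Real.norm_of_nonneg (by positivity)]
      gcongr)
    (by simp [hx]) (summable_invpow x hx m hm) (by simp [hx])
  refine this.congr_deriv ?_
  rw [tsum_neg, tsum_mul_left, TT]

noncomputable def TS (n : ℕ) (x : ℝ) : ℝ := (Nat.ascFactorial 2 n : ℝ) * TT (2 + n) x

lemma TS_dseq : DSeq TS := by
  intro n x hx
  refine ((TT_deriv (2 + n) (by omega) x hx).const_mul (Nat.ascFactorial 2 n : ℝ)).congr_deriv ?_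
  simp only [TS, Nat.ascFactorial_succ, add_assoc]
  push_cast
  ring

lemma TT_shift (x : ℝ) (hx : 0 < x) : TT 2 x = 1 / x ^ 2 + TT 2 (x + 1) := by
  rw [TT, (summable_invpow x hx 2 le_rfl).tsum_eq_zero_add, TT]
  congr 1
  · simp
  · refine tsum_congr fun k => ?_
    push_cast; ring_nf

lemma TS_tendsto (n : ℕ) (x : ℝ) :
    Tendsto (fun N : ℕ => TS n (x + N)) atTop (𝓝 0) := by
  have := (tendsto_sum_nat_add (fun k : ℕ => 1 / (x + k) ^ (2 + n))).const_mul
    (Nat.ascFactorial 2 n : ℝ)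
  rw [mul_zero] at this
  refine this.congr fun N => ?_
  simp only [TS, TT]
  congr 1
  refine tsum_congr fun k => ?_
  push_cast; ring_nf

lemma pp_tendsto (j : ℝ) (m n : ℕ) (x : ℝ) (hm : 1 ≤ m) :
    Tendsto (fun N : ℕ => pp j m n (x + N)) atTop (𝓝 0) := by
  have h1 : Tendsto (fun N : ℕ => x + N + j) atTop atTop :=
    tendsto_atTop_add_const_right _ _
      (tendsto_atTop_add_const_left _ _ tendsto_natCast_atTop_atTop)
  have h2 := ((tendsto_pow_atTop (n := m + n) (by omega)).comp h1).inv_tendsto_atTop.const_mul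
    (m.ascFactorial n : ℝ)
  rw [mul_zero] at h2
  refine h2.congr fun N => ?_
  simp [pp]

lemma gamma_diff (x : ℝ) (hx : 0 < x) : DifferentiableAt ℝ Real.Gamma x :=
  Real.differentiableAt_Gamma fun m => by
    have : (0:ℝ) ≤ m := Nat.cast_nonneg m
    linarith

lemma log_gamma_deriv (x : ℝ) (hx : 0 < x) :
    HasDerivAt (Real.log ∘ Real.Gamma) (digamma x) x :=
  (gamma_diff x hx).hasDerivAt.log (Real.Gamma_pos_of_pos hx).ne'

lemma digamma_mono : MonotoneOn digamma (Ioi 0) := by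
  have := Real.convexOn_log_Gamma.monotoneOn_deriv
    (fun x hx => (log_gamma_deriv x hx).differentiableAt)
  exact this.congr fun x hx => (log_gamma_deriv x hx).deriv

lemma digamma_succ (x : ℝ) (hx : 0 < x) : digamma (x + 1) = digamma x + 1 / x := by
  have h1 : HasDerivAt (fun y => (Real.log ∘ Real.Gamma) (y + 1)) (digamma (x + 1)) x :=
    (log_gamma_deriv (x + 1) (by linarith)).comp_add_const x 1
  have h2 : HasDerivAt (fun y => (Real.log ∘ Real.Gamma) y + Real.log y) (digamma x + x⁻¹) x :=
    (log_gamma_deriv x hx).add (Real.hasDerivAt_log hx.ne')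
  have h3 := h2.congr_of_eventuallyEq (f₁ := fun y => (Real.log ∘ Real.Gamma) (y + 1)) (by
    filter_upwards [Ioi_mem_nhds hx] with y hy
    have hy : 0 < y := hy
    simp only [Function.comp]
    rw [Real.Gamma_add_one hy.ne', Real.log_mul hy.ne' (Real.Gamma_pos_of_pos hy).ne', add_comm])
  rw [one_div]
  exact h1.unique h3

lemma digamma_add_nat (x : ℝ) (hx : 0 < x) (N : ℕ) :
    digamma (x + N) = digamma x + ∑ k ∈ Finset.range N, 1 / (x + k) := by
  induction N with
  | zero => simp
  | succ N ih =>
    rw [Finset.sum_range_succ, ← add_assoc, ← ih, ← digamma_succ (x + N) (by positivity)]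
    push_cast; ring_nf

lemma digamma_diff_tendsto (x : ℝ) (hx : 0 < x) :
    Tendsto (fun N : ℕ => digamma (x + N) - digamma (1 + N)) atTop (𝓝 0) := by
  obtain ⟨M, hM⟩ := exists_nat_ge x
  have hl : Tendsto (fun N : ℕ => -(1 / (N : ℝ))) atTop (𝓝 0) := by
    simpa using (tendsto_one_div_atTop_nhds_zero_nat (𝕜 := ℝ)).neg
  have hu : Tendsto (fun N : ℕ => (M : ℝ) * (1 / (N : ℝ))) atTop (𝓝 0) := by
    simpa using (tendsto_one_div_atTop_nhds_zero_nat (𝕜 := ℝ)).const_mul (M : ℝ)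
  refine tendsto_of_tendsto_of_tendsto_of_le_of_le' hl hu ?_ ?_
  · filter_upwards [eventually_ge_atTop 1] with N hN
    have hN' : (0:ℝ) < N := by exact_mod_cast hN
    have h1 := digamma_succ N hN'
    have h2 : digamma N ≤ digamma (x + N) :=
      digamma_mono (mem_Ioi.2 hN') (mem_Ioi.2 (by positivity)) (by linarith)
    rw [add_comm (1:ℝ)]
    linarith
  · filter_upwards [eventually_ge_atTop 1] with N hN
    have hN' : (0:ℝ) < N := by exact_mod_cast hN
    have h1 := digamma_add_nat (1 + N) (by positivity) M
    have h2 : digamma (x + N) ≤ digamma (1 + N + M) :=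
      digamma_mono (mem_Ioi.2 (by positivity)) (mem_Ioi.2 (by positivity)) (by linarith)
    have h3 : ∑ k ∈ Finset.range M, 1 / (1 + (N:ℝ) + k) ≤ ∑ k ∈ Finset.range M, 1 / (N : ℝ) := by
      refine Finset.sum_le_sum fun k _ => ?_
      apply one_div_le_one_div_of_le hN'
      have : (0:ℝ) ≤ k := Nat.cast_nonneg k
      linarith
    rw [Finset.sum_const, Finset.card_range, nsmul_eq_mul] at h3
    linarith

lemma digamma_term_deriv (k : ℕ) (y : ℝ) (hy : 0 < y) :
    HasDerivAt (fun y : ℝ => 1 / (1 + (k:ℝ)) - 1 / (y + k)) (1 / (y + k) ^ 2) y := by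
  have := (hasDerivAt_invpow k (Nat.cast_nonneg k) 1 y hy).const_sub (1 / (1 + (k:ℝ)))
  simpa using this

lemma digamma_bound (x : ℝ) (k : ℕ) (y : ℝ) (hx : 0 < x) (hy : x < y) :
    ‖1 / (y + (k:ℝ)) ^ 2‖ ≤ 1 / (x + (k:ℝ)) ^ 2 := by
  have : 0 < y := hx.trans hy
  rw [Real.norm_of_nonneg (by positivity)]
  gcongr

lemma digamma_series (x : ℝ) (hx : 0 < x) :
    digamma x = digamma 1 + ∑' k : ℕ, (1 / (1 + (k:ℝ)) - 1 / (x + k)) := by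
  have ha : 0 < min (x / 2) (1 / 2) := by positivity
  have hs : Summable fun k : ℕ => (1 / (1 + (k:ℝ)) - 1 / (x + k)) := by
    refine summable_of_summable_hasDerivAt_of_isPreconnected
      (t := Ioi (min (x / 2) (1 / 2))) (y₀ := 1) (y := x)
      (g := fun (k : ℕ) (y : ℝ) => 1 / (1 + (k:ℝ)) - 1 / (y + k))
      (g' := fun (k : ℕ) (y : ℝ) => 1 / (y + k) ^ 2)
      (summable_invpow _ ha 2 le_rfl) isOpen_Ioi isPreconnected_Ioi
      (fun k y hy => digamma_term_deriv k y (ha.trans hy))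
      (fun k y hy => digamma_bound _ k y ha hy) ?_ ?_ ?_
    · simp; norm_num
    · simp [summable_zero]
    · simp [hx]
  have h1 := hs.hasSum.tendsto_sum_nat
  have h2 : Tendsto (fun N : ℕ => ∑ k ∈ Finset.range N, (1 / (1 + (k:ℝ)) - 1 / (x + k))) atTop
      (𝓝 (digamma x - digamma 1)) := by
    have := (digamma_diff_tendsto x hx).const_sub (digamma x - digamma 1)
    rw [sub_zero] at this
    refine this.congr fun N => ?_
    rw [digamma_add_nat x hx, digamma_add_nat 1 one_pos, Finset.sum_sub_distrib]
    ring
  have := tendsto_nhds_unique h1 h2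
  linarith

lemma deriv_digamma (x : ℝ) (hx : 0 < x) : deriv digamma x = TT 2 x := by
  have ha : 0 < min (x / 2) (1 / 2) := by positivity
  have := hasDerivAt_tsum_of_isPreconnected
      (t := Ioi (min (x / 2) (1 / 2))) (y₀ := 1) (y := x)
      (g := fun (k : ℕ) (y : ℝ) => 1 / (1 + (k:ℝ)) - 1 / (y + k))
      (g' := fun (k : ℕ) (y : ℝ) => 1 / (y + k) ^ 2)
      (summable_invpow _ ha 2 le_rfl) isOpen_Ioi isPreconnected_Ioi
      (fun k y hy => digamma_term_deriv k y (ha.trans hy))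
      (fun k y hy => digamma_bound _ k y ha hy) (by simp; norm_num) (by simp [summable_zero])
      (by simp [hx])
  have h2 := (this.const_add (digamma 1)).congr_of_eventuallyEq (f₁ := digamma) (by
    filter_upwards [Ioi_mem_nhds hx] with y hy
    exact digamma_series y hy)
  exact h2.deriv

/-- derivative sequence for `-F_4` -/
noncomputable def FF (n : ℕ) (x : ℝ) : ℝ :=
  pp 0 2 n x + (1 / 6) * pp 0 1 n x + (-1 / 2) * pp 1 4 n x + (11 / 6) * pp 1 3 n x
    + (-3) * pp 1 2 n x + (17 / 3) * pp 1 1 n x + (-3 / 2) * pp 2 2 n x + (-29 / 6) * pp 2 1 n x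
    + (-1) * TS n x

lemma FF_dseq : DSeq FF := by
  have z : (0:ℝ) ≤ 0 := le_rfl
  have o : (0:ℝ) ≤ 1 := zero_le_one
  have t : (0:ℝ) ≤ 2 := zero_le_two
  exact ((((((((pp_dseq 0 z 2).add ((pp_dseq 0 z 1).cmul _)).add ((pp_dseq 1 o 4).cmul _)).add
    ((pp_dseq 1 o 3).cmul _)).add ((pp_dseq 1 o 2).cmul _)).add ((pp_dseq 1 o 1).cmul _)).add
    ((pp_dseq 2 t 2).cmul _)).add ((pp_dseq 2 t 1).cmul _)).add (TS_dseq.cmul _)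

lemma FF_tendsto (n : ℕ) (x : ℝ) : Tendsto (fun N : ℕ => FF n (x + N)) atTop (𝓝 0) := by
  have h (j : ℝ) (m : ℕ) (hm : 1 ≤ m) (c : ℝ) :
      Tendsto (fun N : ℕ => c * pp j m n (x + N)) atTop (𝓝 0) := by
    simpa using (pp_tendsto j m n x hm).const_mul c
  have hT : Tendsto (fun N : ℕ => (-1) * TS n (x + N)) atTop (𝓝 0) := by
    simpa using (TS_tendsto n x).const_mul (-1)
  have := ((((((((pp_tendsto 0 2 n x (by norm_num)).add (h 0 1 (by norm_num) (1 / 6))).add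
    (h 1 4 (by norm_num) (-1 / 2))).add (h 1 3 (by norm_num) (11 / 6))).add
    (h 1 2 (by norm_num) (-3))).add (h 1 1 (by norm_num) (17 / 3))).add
    (h 2 2 (by norm_num) (-3 / 2))).add (h 2 1 (by norm_num) (-29 / 6))).add hT
  simp only [add_zero] at this
  exact this

noncomputable def DD (x : ℝ) : ℝ :=
  (1 / (x + 2)) ^ 4 * (1 / (x + 3)) ^ 2 * (24 * ((1 / (x + 0)) * (1 / (x + 1)) ^ 4)
    + 22 * (1 / (x + 1)) ^ 4 + (64 / 3) * (1 / (x + 1)) ^ 3 + (145 / 6) * (1 / (x + 1)) ^ 2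
    + (115 / 6) * (1 / (x + 1)) + (41 / 6) * 1)

noncomputable def AA (x : ℝ) : ℝ :=
  (1 / (x + 2)) ^ 2 * ((1 / 6) * ((1 / (x + 0)) * (1 / (x + 1)) ^ 3)
    + (1 / 8) * (1 / (x + 1)) ^ 3 + (5 / 24) * (1 / (x + 1)) ^ 2)

lemma cm_one : CompletelyMonotonicOn (fun _ => (1:ℝ)) (Ioi 0) := by
  have h : DSeq (fun n _ => if n = 0 then (1:ℝ) else 0) := by
    intro n x hx
    simpa using hasDerivAt_const x _
  refine cm_congr (h.cm fun n x _ => ?_) fun x hx => ?_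
  · split_ifs <;> norm_num
  · simp

lemma DD_cm : CompletelyMonotonicOn DD (Ioi 0) := by
  have z := cm_inv 0 le_rfl
  have o := cm_inv 1 zero_le_one
  have t := cm_inv 2 zero_le_two
  have r := cm_inv 3 zero_le_three
  exact cm_mul (cm_mul (cm_pow t 3) (cm_pow r 1)) (cm_add (cm_add (cm_add (cm_add (cm_add
    (cm_cmul (cm_mul z (cm_pow o 3)) (by norm_num)) (cm_cmul (cm_pow o 3) (by norm_num)))
    (cm_cmul (cm_pow o 2) (by norm_num))) (cm_cmul (cm_pow o 1) (by norm_num)))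
    (cm_cmul o (by norm_num))) (cm_cmul cm_one (by norm_num)))

lemma AA_cm : CompletelyMonotonicOn AA (Ioi 0) := by
  have z := cm_inv 0 le_rfl
  have o := cm_inv 1 zero_le_one
  have t := cm_inv 2 zero_le_two
  exact cm_mul (cm_pow t 1) (cm_add (cm_add
    (cm_cmul (cm_mul z (cm_pow o 2)) (by norm_num)) (cm_cmul (cm_pow o 2) (by norm_num)))
    (cm_cmul (cm_pow o 1) (by norm_num)))

lemma FF_sub (x : ℝ) (hx : 0 < x) : FF 0 x - FF 0 (x + 1) = DD x := by
  simp only [FF, pp, TS, DD, Nat.ascFactorial_zero, Nat.cast_one, one_mul, add_zero]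
  rw [TT_shift x hx]
  rw [show x + 1 + 1 = x + 2 by ring, show x + 1 + 2 = x + 3 by ring]
  field_simp
  ring

lemma FF_nonneg (n : ℕ) (x : ℝ) (hx : 0 < x) : 0 ≤ FF n x := by
  have hG : DSeq (fun n x => FF n x + (-1) * FF n (x + 1)) := FF_dseq.add (FF_dseq.shift.cmul _)
  have hcm : CompletelyMonotonicOn (fun x => FF 0 x + (-1) * FF 0 (x + 1)) (Ioi 0) :=
    cm_congr DD_cm fun x hx => by rw [← FF_sub x hx]; ring
  have hstep (y : ℝ) (hy : 0 < y) : FF n (y + 1) ≤ FF n y := by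
    have := hG.nonneg hcm n y hy
    linarith
  have hN (N : ℕ) : FF n (x + N) ≤ FF n x := by
    induction N with
    | zero => simp
    | succ N ih =>
      have := hstep (x + N) (by positivity)
      push_cast
      rw [← add_assoc]
      linarith
  exact le_of_tendsto' (FF_tendsto n x) hN

lemma FF_cm : CompletelyMonotonicOn (FF 0) (Ioi 0) := FF_dseq.cm FF_nonneg

lemma DD_le (x : ℝ) (hx : 1 ≤ x) : DD x ≤ 25 / x ^ 5 - 25 / (x + 1) ^ 5 := by
  have h0 : 0 < x := by linarith
  have i0 : 1 / (x + 0) ≤ 1 := by rw [div_le_one] <;> linarith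
  have i1 : 1 / (x + 1) ≤ 1 := by rw [div_le_one] <;> linarith
  have p1 : 0 ≤ 1 / (x + 1) := by positivity
  have p0 : 0 ≤ 1 / (x + 0) := by positivity
  have q4 := pow_le_one₀ (n := 4) p1 i1
  have q3 := pow_le_one₀ (n := 3) p1 i1
  have q2 := pow_le_one₀ (n := 2) p1 i1
  have q5 := mul_le_one₀ i0 (pow_nonneg p1 4) q4
  have e : DD x ≤ (1 / (x + 1)) ^ 4 * (1 / (x + 1)) ^ 2 * 125 := by
    unfold DD
    gcongr
    · linarith
    · linarith
    · linarith
  refine e.trans ?_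
  have key : 25 / x ^ 5 - 25 / (x + 1) ^ 5 - (1 / (x + 1)) ^ 4 * (1 / (x + 1)) ^ 2 * 125
      = (25 * ((x + 1) ^ 6 - x ^ 5 * (x + 1)) - 125 * x ^ 5) / (x ^ 5 * (x + 1) ^ 6) := by
    field_simp
  have : 0 ≤ (25 * ((x + 1) ^ 6 - x ^ 5 * (x + 1)) - 125 * x ^ 5) / (x ^ 5 * (x + 1) ^ 6) := by
    apply div_nonneg _ (by positivity)
    ring_nf
    positivity
  linarith

lemma FF_le (x : ℝ) (hx : 1 ≤ x) : FF 0 x ≤ 25 / x ^ 5 := by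
  have h0 : 0 < x := by linarith
  have hN (N : ℕ) : FF 0 x - 25 / x ^ 5 ≤ FF 0 (x + N) := by
    have : FF 0 x - 25 / x ^ 5 ≤ FF 0 (x + N) - 25 / (x + N) ^ 5 := by
      induction N with
      | zero => simp
      | succ N ih =>
        have hn : (0:ℝ) ≤ N := Nat.cast_nonneg N
        have h1 := FF_sub (x + N) (by positivity)
        have h2 := DD_le (x + N) (by linarith)
        push_cast
        rw [← add_assoc]
        linarith
    have : 0 ≤ 25 / (x + N) ^ 5 := by positivity
    linarith
  have := ge_of_tendsto' (FF_tendsto 0 x) hN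
  linarith

lemma main_eq (lam x : ℝ) (hx : 0 < x) :
    -(deriv digamma x -
        lam * (4 + 8 * x + 5 * x ^ 2) / (24 * x * (1 + x) ^ 3 * (2 + x) ^ 2) -
        (24 + 120 * x + 283 * x ^ 2 + 399 * x ^ 3 + 345 * x ^ 4 + 181 * x ^ 5 +
          51 * x ^ 6 + 6 * x ^ 7) / (6 * x ^ 2 * (1 + x) ^ 4 * (2 + x) ^ 2)) =
    FF 0 x + (lam - 4) * AA x := by
  rw [deriv_digamma x hx]
  simp only [FF, pp, TS, AA, Nat.ascFactorial_zero, Nat.cast_one, one_mul, add_zero]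
  rw [add_comm 1 x, add_comm 2 x]
  field_simp
  ring

lemma AA_ge (x : ℝ) (hx : 1 ≤ x) : 5 / 1944 / x ^ 4 ≤ AA x := by
  have h0 : 0 < x := by linarith
  have a : 1 / (3 * x) ≤ 1 / (x + 1) := one_div_le_one_div_of_le (by positivity) (by linarith)
  have b : 1 / (3 * x) ≤ 1 / (x + 2) := one_div_le_one_div_of_le (by positivity) (by linarith)
  calc 5 / 1944 / x ^ 4 = (1 / (3 * x)) ^ 2 * (5 / 24 * (1 / (3 * x)) ^ 2) := by field_simp; norm_num
    _ ≤ (1 / (x + 2)) ^ 2 * (5 / 24 * (1 / (x + 1)) ^ 2) := by gcongr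
    _ ≤ AA x := by
      unfold AA
      have : 0 ≤ (1 / 6) * ((1 / (x + 0)) * (1 / (x + 1)) ^ 3) + (1 / 8) * (1 / (x + 1)) ^ 3 := by
        positivity
      gcongr
      linarith

theorem stmt_6 (lam : ℝ) :
    CompletelyMonotonicOn
      (fun x : ℝ => -(deriv digamma x -
        lam * (4 + 8 * x + 5 * x ^ 2) / (24 * x * (1 + x) ^ 3 * (2 + x) ^ 2) -
        (24 + 120 * x + 283 * x ^ 2 + 399 * x ^ 3 + 345 * x ^ 4 + 181 * x ^ 5 +
          51 * x ^ 6 + 6 * x ^ 7) / (6 * x ^ 2 * (1 + x) ^ 4 * (2 + x) ^ 2)))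
      (Set.Ioi 0) ↔ 4 ≤ lam := by
  constructor
  · intro h
    by_contra! hl
    have hp (x : ℝ) (hx : 0 < x) : 0 ≤ FF 0 x + (lam - 4) * AA x := by
      have := h.2 0 x hx
      rw [iteratedDerivWithin_zero, pow_zero, one_mul] at this
      rwa [main_eq lam x hx] at this
    have hc : 0 < 4 - lam := by linarith
    obtain ⟨x, hx⟩ := exists_gt (max 1 (25 * 1944 / 5 / (4 - lam)))
    have hx1 : 1 ≤ x := ((le_max_left _ _).trans_lt hx).le
    have hx2 := (le_max_right _ _).trans_lt hx
    have h0 : 0 < x := by linarith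
    have h1 := hp x h0
    have h2 := FF_le x hx1
    have h3 := mul_le_mul_of_nonneg_left (AA_ge x hx1) hc.le
    have h4 : (4 - lam) * (5 / 1944 / x ^ 4) ≤ 25 / x ^ 5 := by linarith
    have h5 : (4 - lam) * (5 / 1944) * x ≤ 25 := by
      have := mul_le_mul_of_nonneg_right h4 (pow_nonneg h0.le 5)
      field_simp at this
      linarith
    rw [div_lt_iff₀ hc] at hx2
    linarith
  · intro h
    exact cm_congr (cm_add FF_cm (cm_cmul AA_cm (c := lam - 4) (by linarith)))
      fun x hx => main_eq lam x hx
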